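/- arXiv:2303.05337 — 2 statements merged into one kernel-verified Lean document; each statement's English description precedes it below -/
import Mathlib

section
/- Let γ ∈ [0,+∞), let φ ∈ Γ₀(ℝ) be even with 0 in the interior of dom φ, set Φ = φ ∘ ‖·‖ on H, and let x ∈ H. Then Φ ∈ Γ₀(H) and prox_{γ⊙Φ} x = (prox_{γ⊙φ}‖x‖ / ‖x‖) · x if x ≠ 0, and prox_{γ⊙Φ} x = 0 if x = 0. -/
open scoped Classical

noncomputable section

/-- Effective domain of an extended-real-valued function. -/
def edom {E : Type*} (f : E → EReal) : Set E := {x | f x < ⊤}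

/-- Convexity of an extended-real-valued function, via its epigraph. -/
def ConvexEpi {E : Type*} [AddCommGroup E] [Module ℝ E] (f : E → EReal) : Prop :=
  Convex ℝ {p : E × ℝ | f p.1 ≤ (p.2 : EReal)}

/-- `f ∈ Γ₀(E)`: proper, lower semicontinuous, convex, with values in `(-∞, +∞]`. -/
def IsGamma0 {E : Type*} [AddCommGroup E] [Module ℝ E] [TopologicalSpace E]
    (f : E → EReal) : Prop :=
  (∃ x, f x ≠ ⊤) ∧ (∀ x, f x ≠ ⊥) ∧ LowerSemicontinuous f ∧ ConvexEpi f

/-- Proximity operator: the (unique, for `f ∈ Γ₀`) minimizer of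
`y ↦ f y + ‖x - y‖² / 2`. -/
def prox {E : Type*} [NormedAddCommGroup E] [InnerProductSpace ℝ E]
    (f : E → EReal) (x : E) : E :=
  Classical.epsilon fun p =>
    ∀ y, f p + ((‖x - p‖ ^ 2 / 2 : ℝ) : EReal) ≤ f y + ((‖x - y‖ ^ 2 / 2 : ℝ) : EReal)

/-- Metric projection onto a set. -/
def projC {E : Type*} [NormedAddCommGroup E] (C : Set E) (x : E) : E :=
  Classical.epsilon fun p => p ∈ C ∧ ∀ y ∈ C, ‖x - p‖ ≤ ‖x - y‖

/-- Fenchel conjugate. -/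
def fconj {E : Type*} [NormedAddCommGroup E] [InnerProductSpace ℝ E]
    (f : E → EReal) (y : E) : EReal :=
  ⨆ x, ((inner ℝ x y : ℝ) : EReal) - f x

/-- Plain scalar multiple `ξ·f`. -/
def smulE {E : Type*} (ξ : ℝ) (f : E → EReal) : E → EReal := fun x => (ξ : EReal) * f x

/-- The operation `ξ ⊙ f`: indicator of `cl (dom f)` if `ξ = 0`, and `ξ·f` if `ξ > 0`. -/
def rscale {E : Type*} [TopologicalSpace E] (ξ : ℝ) (f : E → EReal) : E → EReal :=
  if ξ = 0 then fun x => if x ∈ closure (edom f) then (0 : EReal) else ⊤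
  else fun x => (ξ : EReal) * f x

/-- `f^∨`: agrees with `f` where `-∞ < f < 0`, and is `+∞` elsewhere. -/
def pbas {E : Type*} (f : E → EReal) : E → EReal :=
  fun x => if ⊥ < f x ∧ f x < 0 then f x else ⊤

/-- `f^∧`: agrees with `f` where `0 < f < +∞`, and is `+∞` elsewhere. -/
def phaut {E : Type*} (f : E → EReal) : E → EReal :=
  fun x => if 0 < f x ∧ f x < ⊤ then f x else ⊤

/-- `f_▽ = (f^∨)**`. -/
def basEnv {E : Type*} [NormedAddCommGroup E] [InnerProductSpace ℝ E]
    (f : E → EReal) : E → EReal :=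
  fconj (fconj (pbas f))

/-- `f_▲ = (f^∧)**`. -/
def hautEnv {E : Type*} [NormedAddCommGroup E] [InnerProductSpace ℝ E]
    (f : E → EReal) : E → EReal :=
  fconj (fconj (phaut f))

/-- `S = s⁻¹((0, +∞))`. -/
def sdom {G : Type*} (s : G → EReal) : Set G := {v | 0 < s v ∧ s v < ⊤}

/-- The preperspective `φ ⋉ s`, on the Hilbert direct sum `H ⊕ G`. -/
def prePersp {H G : Type*} [NormedAddCommGroup H] [InnerProductSpace ℝ H]
    [NormedAddCommGroup G] [InnerProductSpace ℝ G]
    (φ : H → EReal) (s : G → EReal) : WithLp 2 (H × G) → EReal := fun q =>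
  if 0 < s ((WithLp.equiv 2 (H × G)) q).2 ∧ s ((WithLp.equiv 2 (H × G)) q).2 < ⊤ then
    s ((WithLp.equiv 2 (H × G)) q).2 *
      φ ((s ((WithLp.equiv 2 (H × G)) q).2).toReal⁻¹ • ((WithLp.equiv 2 (H × G)) q).1)
  else ⊤

/-- The perspective `φ ▷ s`: the largest lower semicontinuous convex minorant of the
preperspective `φ ⋉ s`, on the Hilbert direct sum `H ⊕ G`. -/
def persp {H G : Type*} [NormedAddCommGroup H] [InnerProductSpace ℝ H]
    [NormedAddCommGroup G] [InnerProductSpace ℝ G]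
    (φ : H → EReal) (s : G → EReal) : WithLp 2 (H × G) → EReal := fun q =>
  sSup {t : EReal | ∃ g : WithLp 2 (H × G) → EReal,
    LowerSemicontinuous g ∧ ConvexEpi g ∧ (∀ r, g r ≤ prePersp φ s r) ∧ t = g q}

/-- The point `(x, y)` in the Hilbert direct sum `H ⊕ G`. -/
def pairHG {H G : Type*} (x : H) (y : G) : WithLp 2 (H × G) :=
  (WithLp.equiv 2 (H × G)).symm (x, y)

end

/-!
An even convex function on `ℝ` has symmetric convex sublevel sets, so it is nondecreasing on
`[0, +∞)` and minimal at `0`; hence `φ ∘ ‖·‖` is convex. Moreover `γ ⊙ (φ ∘ ‖·‖) = (γ ⊙ φ) ∘ ‖·‖`,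
so only the proximity operator of `g ∘ ‖·‖` for an even `g ∈ Γ₀(ℝ)` has to be computed. Folding
`ℝ` onto `[0, ‖x‖]` by `y ↦ min |y| ‖x‖` never increases the objective of `prox g ‖x‖`, whose
minimizer `p` therefore exists and lies in `[0, ‖x‖]`. The point `q = (p / ‖x‖) • x` has norm `p`
and turns the reverse triangle inequality `|‖x‖ - ‖q‖| ≤ ‖x - q‖` into an equality, so it
minimizes the objective on `H`.
-/

section ConvexEpi

variable {E : Type*} [AddCommGroup E] [Module ℝ E] {f : E → EReal}

theorem ConvexEpi.quasiconvexOn (hf : ConvexEpi f) : QuasiconvexOn ℝ Set.univ f := by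
  refine convex_univ.quasiconvexOn_of_convex_le fun r x hx y hy a b ha hb hab => ?_
  refine EReal.le_of_forall_lt_iff_le.1 fun t hrt => ?_
  have h := hf (x := (x, t)) (hx.trans hrt.le) (y := (y, t)) (hy.trans hrt.le) ha hb hab
  simpa only [Set.mem_ofPred_eq, Prod.smul_mk, Prod.mk_add_mk, ← add_smul, hab, one_smul] using h

theorem ConvexEpi.convex_edom (hf : ConvexEpi f) : Convex ℝ (edom f) := by
  simpa only [edom, Set.mem_univ, true_and] using hf.quasiconvexOn.convex_lt ⊤

theorem ConvexEpi.const_mul (hf : ConvexEpi f) {γ : ℝ} (hγ : 0 < γ) :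
    ConvexEpi fun x => (γ : EReal) * f x := by
  have hlin : IsLinearMap ℝ fun p : E × ℝ => (p.1, p.2 / γ) :=
    ⟨fun p q => by simp [add_div], fun c p => by simp [mul_div_assoc]⟩
  have hpre := hf.is_linear_preimage hlin
  refine (congrArg (Convex ℝ) (Set.ext fun p => ?_)).mp hpre
  have hγ' : (0 : EReal) < γ := by exact_mod_cast hγ
  change f p.1 ≤ ((p.2 / γ : ℝ) : EReal) ↔ (γ : EReal) * f p.1 ≤ p.2
  rw [EReal.coe_div, EReal.le_div_iff_mul_le hγ' (EReal.coe_ne_top γ), mul_comm]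

end ConvexEpi

section Even

theorem apply_abs_of_even {α β : Type*} [AddGroup α] [LinearOrder α] {f : α → β} (hf : f.Even)
    (a : α) : f |a| = f a := by
  rcases abs_choice a with h | h <;> rw [h]
  exact hf a

variable {φ : ℝ → EReal}

theorem ConvexEpi.monotoneOn_Ici_of_even (hφ : ConvexEpi φ) (heven : φ.Even) :
    MonotoneOn φ (Set.Ici 0) := by
  intro s hs t _ hst
  have hconv := (hφ.quasiconvexOn (φ t)).ordConnected
  have ht : t ∈ {u | u ∈ Set.univ ∧ φ u ≤ φ t} := ⟨trivial, le_rfl⟩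
  have hneg : -t ∈ {u | u ∈ Set.univ ∧ φ u ≤ φ t} := ⟨trivial, (heven t).le⟩
  have hs : 0 ≤ s := hs
  exact (hconv.out hneg ht ⟨by linarith, hst⟩).2

theorem ConvexEpi.apply_zero_le_of_even (hφ : ConvexEpi φ) (heven : φ.Even) (t : ℝ) :
    φ 0 ≤ φ t :=
  apply_abs_of_even heven t ▸
    hφ.monotoneOn_Ici_of_even heven Set.self_mem_Ici (abs_nonneg t) (abs_nonneg t)

theorem IsGamma0.zero_mem_edom_of_even (hφ : IsGamma0 φ) (heven : φ.Even) : 0 ∈ edom φ := by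
  obtain ⟨⟨t, ht⟩, -, -, hconv⟩ := hφ
  exact (hconv.apply_zero_le_of_even heven t).trans_lt (lt_top_iff_ne_top.2 ht)

end Even

section CompNorm

variable {E : Type*} [SeminormedAddCommGroup E] [NormedSpace ℝ E] {φ : ℝ → EReal}

theorem ConvexEpi.comp_norm (hφ : ConvexEpi φ) (hmono : MonotoneOn φ (Set.Ici 0)) :
    ConvexEpi fun z : E => φ ‖z‖ := by
  rintro ⟨z, r⟩ hz ⟨w, s⟩ hw a b ha hb hab
  have hnorm : ‖a • z + b • w‖ ≤ a * ‖z‖ + b * ‖w‖ := by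
    simpa only [norm_smul_of_nonneg ha, norm_smul_of_nonneg hb] using norm_add_le (a • z) (b • w)
  calc φ ‖a • z + b • w‖ ≤ φ (a * ‖z‖ + b * ‖w‖) :=
        hmono (norm_nonneg _) ((norm_nonneg _).trans hnorm) hnorm
    _ ≤ ((a * r + b * s : ℝ) : EReal) := hφ (x := (‖z‖, r)) hz (y := (‖w‖, s)) hw ha hb hab

theorem IsGamma0.comp_norm (hφ : IsGamma0 φ) (heven : φ.Even) :
    IsGamma0 fun z : E => φ ‖z‖ := by
  have hzero := hφ.zero_mem_edom_of_even heven
  obtain ⟨-, hbot, hlsc, hconv⟩ := hφ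
  exact ⟨⟨0, by simpa only [norm_zero] using hzero.ne⟩, fun z => hbot ‖z‖,
    hlsc.comp continuous_norm, hconv.comp_norm (hconv.monotoneOn_Ici_of_even heven)⟩

theorem closure_preimage_norm {D : Set ℝ} (hzero : 0 ∈ D) (habs : ∀ t ∈ D, |t| ∈ D) :
    closure ((‖·‖ : E → ℝ) ⁻¹' D) = (‖·‖ : E → ℝ) ⁻¹' closure D := by
  refine (continuous_norm.closure_preimage_subset D).antisymm fun z hz => ?_
  rcases eq_or_ne ‖z‖ 0 with hz₀ | hz₀
  · exact subset_closure (by simpa only [Set.mem_preimage, hz₀] using hzero)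
  · have hray : Continuous fun t : ℝ => (t / ‖z‖) • z := by fun_prop
    have hmaps : Set.MapsTo (fun t : ℝ => (t / ‖z‖) • z) D ((‖·‖ : E → ℝ) ⁻¹' D) := by
      intro t ht
      have hnorm : ‖(t / ‖z‖) • z‖ = |t| := by
        rw [norm_smul, norm_div, norm_norm, div_mul_cancel₀ _ hz₀, Real.norm_eq_abs]
      simpa only [Set.mem_preimage, hnorm] using habs t ht
    simpa only [div_self hz₀, one_smul] using map_mem_closure hray hz hmaps

theorem norm_div_norm_smul {x : E} {p : ℝ} (hp : p ∈ Set.Icc 0 ‖x‖) : ‖(p / ‖x‖) • x‖ = p := by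
  rw [norm_smul_of_nonneg (div_nonneg hp.1 (norm_nonneg x))]
  exact div_mul_cancel_of_imp fun hx => le_antisymm (hx ▸ hp.2) hp.1

theorem norm_sub_div_norm_smul {x : E} {p : ℝ} (hp : p ∈ Set.Icc 0 ‖x‖) :
    ‖x - (p / ‖x‖) • x‖ = ‖x‖ - p := by
  have hle : 0 ≤ 1 - p / ‖x‖ := sub_nonneg.2 (div_le_one_of_le₀ hp.2 (norm_nonneg x))
  have hfactor : x - (p / ‖x‖) • x = (1 - p / ‖x‖) • x := by rw [sub_smul, one_smul]
  rw [hfactor, norm_smul_of_nonneg hle, sub_mul, one_mul]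
  exact congrArg _ (div_mul_cancel_of_imp fun hx => le_antisymm (hx ▸ hp.2) hp.1)

end CompNorm

section RScale

/-- The indicator function of convex analysis, `0` on `C` and `+∞` elsewhere; it is the value of
`0 ⊙ f` for `C = closure (edom f)`. -/
noncomputable def convexIndicator {E : Type*} (C : Set E) : E → EReal := Cᶜ.indicator fun _ => ⊤

theorem convexIndicator_le_coe_iff {E : Type*} {C : Set E} {x : E} {r : ℝ} :
    convexIndicator C x ≤ r ↔ x ∈ C ∧ 0 ≤ r := by
  by_cases hx : x ∈ C <;> simp [convexIndicator, hx]

theorem rscale_zero {E : Type*} [TopologicalSpace E] (f : E → EReal) :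
    rscale 0 f = convexIndicator (closure (edom f)) := by
  ext x
  by_cases hx : x ∈ closure (edom f) <;> simp [rscale, convexIndicator, hx]

theorem rscale_of_ne_zero {E : Type*} [TopologicalSpace E] {γ : ℝ} (hγ : γ ≠ 0) (f : E → EReal) :
    rscale γ f = fun x => (γ : EReal) * f x :=
  if_neg hγ

theorem isGamma0_convexIndicator {E : Type*} [AddCommGroup E] [Module ℝ E] [TopologicalSpace E]
    {C : Set E} (hne : C.Nonempty) (hclosed : IsClosed C) (hconv : Convex ℝ C) :
    IsGamma0 (convexIndicator C) := by
  obtain ⟨x₀, hx₀⟩ := hne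
  refine ⟨⟨x₀, by simp [convexIndicator, hx₀]⟩, fun x => ?_,
    hclosed.isOpen_compl.lowerSemicontinuous_indicator le_top, ?_⟩
  · by_cases hx : x ∈ C <;> simp [convexIndicator, hx]
  · have hepi : {p : E × ℝ | convexIndicator C p.1 ≤ (p.2 : EReal)} = C ×ˢ Set.Ici 0 :=
      Set.ext fun _ => convexIndicator_le_coe_iff
    rw [ConvexEpi, hepi]
    exact hconv.prod (convex_Ici 0)

theorem IsGamma0.const_mul {E : Type*} [AddCommGroup E] [Module ℝ E] [TopologicalSpace E]
    {f : E → EReal} (hf : IsGamma0 f) {γ : ℝ} (hγ : 0 < γ) :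
    IsGamma0 fun x => (γ : EReal) * f x := by
  obtain ⟨⟨w, hw⟩, hbot, hlsc, hconv⟩ := hf
  have hcont : Continuous fun t : EReal => (γ : EReal) * t :=
    continuous_iff_continuousAt.2 fun t => by
      have hmul : ContinuousAt (fun p : EReal × EReal => p.1 * p.2) ((γ : EReal), t) :=
        EReal.continuousAt_mul (by simp [hγ.ne']) (by simp [hγ.ne']) (by simp) (by simp)
      exact hmul.comp (by fun_prop : ContinuousAt (fun s : EReal => ((γ : EReal), s)) t)
  have hmono : Monotone fun t : EReal => (γ : EReal) * t := fun s t hst =>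
    mul_le_mul_of_nonneg_left hst (EReal.coe_nonneg.2 hγ.le)
  refine ⟨⟨w, ?_⟩, fun x => ?_, hcont.comp_lowerSemicontinuous hlsc hmono, hconv.const_mul hγ⟩
  · lift f w to ℝ using ⟨hw, hbot w⟩ with r
    exact EReal.coe_ne_top (γ * r)
  · simp [EReal.mul_eq_bot, hbot x, hγ.le]

theorem isGamma0_rscale {E : Type*} [AddCommGroup E] [Module ℝ E] [TopologicalSpace E]
    [IsTopologicalAddGroup E] [ContinuousConstSMul ℝ E] {f : E → EReal} (hf : IsGamma0 f)
    {γ : ℝ} (hγ : 0 ≤ γ) : IsGamma0 (rscale γ f) := by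
  rcases hγ.eq_or_lt with rfl | hγ
  · obtain ⟨⟨w, hw⟩, -, -, hconv⟩ := hf
    have hne : (edom f).Nonempty := ⟨w, lt_top_iff_ne_top.2 hw⟩
    rw [rscale_zero]
    exact isGamma0_convexIndicator hne.closure isClosed_closure hconv.convex_edom.closure
  · rw [rscale_of_ne_zero hγ.ne']
    exact hf.const_mul hγ

theorem rscale_comp_homeomorph {E F : Type*} [TopologicalSpace E] [TopologicalSpace F] (γ : ℝ)
    (f : F → EReal) (e : E ≃ₜ F) : rscale γ (fun x => f (e x)) = fun x => rscale γ f (e x) := by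
  rcases eq_or_ne γ 0 with rfl | hγ
  · have hcl : closure (edom fun x => f (e x)) = e ⁻¹' closure (edom f) :=
      (e.preimage_closure (edom f)).symm
    rw [rscale_zero, rscale_zero, hcl]
    rfl
  · simp only [rscale_of_ne_zero hγ]

theorem even_rscale {E : Type*} [AddGroup E] [TopologicalSpace E] [ContinuousNeg E] {f : E → EReal}
    (hf : f.Even) (γ : ℝ) : (rscale γ f).Even := fun x => by
  have hneg := rscale_comp_homeomorph γ f (Homeomorph.neg E)
  simp only [Homeomorph.coe_neg, hf.eq] at hneg
  exact (congrFun hneg x).symm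

theorem rscale_comp_norm {E : Type*} [SeminormedAddCommGroup E] [NormedSpace ℝ E] {φ : ℝ → EReal}
    (heven : φ.Even) (hzero : 0 ∈ edom φ) (γ : ℝ) :
    rscale γ (fun z : E => φ ‖z‖) = fun z => rscale γ φ ‖z‖ := by
  rcases eq_or_ne γ 0 with rfl | hγ
  · have habs : ∀ t ∈ edom φ, |t| ∈ edom φ := fun t ht =>
      (apply_abs_of_even heven t).trans_lt ht
    have hcl : closure (edom fun z : E => φ ‖z‖) = (‖·‖ : E → ℝ) ⁻¹' closure (edom φ) :=
      closure_preimage_norm hzero habs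
    rw [rscale_zero, rscale_zero, hcl]
    rfl
  · simp only [rscale_of_ne_zero hγ]

end RScale

section Prox

variable {E : Type*} [NormedAddCommGroup E]

/-- `p` minimizes `y ↦ f y + ‖x - y‖² / 2`; `prox f x` is a choice of such a `p`, with an arbitrary
value if there is none. -/
def IsProxPoint (f : E → EReal) (x p : E) : Prop :=
  ∀ y, f p + ((‖x - p‖ ^ 2 / 2 : ℝ) : EReal) ≤ f y + ((‖x - y‖ ^ 2 / 2 : ℝ) : EReal)

theorem IsProxPoint.ne_top {f : E → EReal} {x p : E} (hp : IsProxPoint f x p)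
    (hdom : ∃ w, f w ≠ ⊤) : f p ≠ ⊤ := by
  obtain ⟨w, hw⟩ := hdom
  intro htop
  have h := hp w
  rw [htop, EReal.top_add_coe, top_le_iff] at h
  exact EReal.add_ne_top hw (EReal.coe_ne_top _) h

theorem exists_isProxPoint_mem_Icc {g : ℝ → EReal} (hlsc : LowerSemicontinuous g)
    (heven : g.Even) (hmono : MonotoneOn g (Set.Ici 0)) {a : ℝ} (ha : 0 ≤ a) :
    ∃ p ∈ Set.Icc 0 a, IsProxPoint g a p := by
  have hobj : LowerSemicontinuous fun y => g y + ((‖a - y‖ ^ 2 / 2 : ℝ) : EReal) :=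
    hlsc.add' (continuous_coe_real_ereal.comp (by fun_prop)).lowerSemicontinuous fun _ =>
      EReal.continuousAt_add (Or.inr (EReal.coe_ne_bot _)) (Or.inr (EReal.coe_ne_top _))
  obtain ⟨p, hp, hmin⟩ := (hobj.lowerSemicontinuousOn (Set.Icc 0 a)).exists_isMinOn
    (Set.nonempty_Icc.2 ha) isCompact_Icc
  refine ⟨p, hp, fun y => ?_⟩
  have hfold : 0 ≤ min |y| a := le_min (abs_nonneg y) ha
  have hvalue : g (min |y| a) ≤ g y :=
    (hmono hfold (abs_nonneg y) (min_le_left _ _)).trans_eq (apply_abs_of_even heven y)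
  have hdist : ‖a - min |y| a‖ ≤ ‖a - y‖ := by
    rw [Real.norm_of_nonneg (sub_nonneg.2 (min_le_right _ _)), Real.norm_eq_abs]
    rcases min_cases |y| a with ⟨h, -⟩ | ⟨h, -⟩ <;> rw [h]
    · linarith [le_abs_self y, le_abs_self (a - y)]
    · simp
  refine (hmin ⟨hfold, min_le_right _ _⟩).trans (add_le_add hvalue (EReal.coe_le_coe_iff.2 ?_))
  gcongr

theorem IsProxPoint.comp_norm [NormedSpace ℝ E] {g : ℝ → EReal} {x : E} {p : ℝ}
    (hp : IsProxPoint g ‖x‖ p) (hmem : p ∈ Set.Icc 0 ‖x‖) :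
    IsProxPoint (fun z : E => g ‖z‖) x ((p / ‖x‖) • x) := by
  intro y
  beta_reduce
  rw [norm_div_norm_smul hmem, norm_sub_div_norm_smul hmem]
  have hreverse : ‖‖x‖ - ‖y‖‖ ≤ ‖x - y‖ := abs_norm_sub_norm_le x y
  calc g p + (((‖x‖ - p) ^ 2 / 2 : ℝ) : EReal)
      = g p + ((‖‖x‖ - p‖ ^ 2 / 2 : ℝ) : EReal) := by rw [Real.norm_eq_abs, sq_abs]
    _ ≤ g ‖y‖ + ((‖‖x‖ - ‖y‖‖ ^ 2 / 2 : ℝ) : EReal) := hp ‖y‖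
    _ ≤ g ‖y‖ + ((‖x - y‖ ^ 2 / 2 : ℝ) : EReal) :=
        add_le_add le_rfl (EReal.coe_le_coe_iff.2 (by gcongr))

variable [InnerProductSpace ℝ E]

theorem IsProxPoint.eq {f : E → EReal} (hdom : ∃ w, f w ≠ ⊤) (hbot : ∀ z, f z ≠ ⊥)
    (hconv : ConvexEpi f) {x p q : E} (hp : IsProxPoint f x p) (hq : IsProxPoint f x q) :
    p = q := by
  obtain ⟨r, hr⟩ : ∃ r : ℝ, f p = r := ⟨_, (EReal.coe_toReal (hp.ne_top hdom) (hbot p)).symm⟩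
  obtain ⟨s, hs⟩ : ∃ s : ℝ, f q = s := ⟨_, (EReal.coe_toReal (hq.ne_top hdom) (hbot q)).symm⟩
  set m := midpoint ℝ p q
  have hm : f m ≤ ((midpoint ℝ r s : ℝ) : EReal) :=
    hconv.midpoint_mem (x := (p, r)) (y := (q, s)) hr.le hs.le
  have hpm : r + ‖x - p‖ ^ 2 / 2 ≤ midpoint ℝ r s + ‖x - m‖ ^ 2 / 2 := by
    have h := (hp m).trans (add_le_add_left hm _)
    rw [hr] at h
    exact_mod_cast h
  have hqm : s + ‖x - q‖ ^ 2 / 2 ≤ midpoint ℝ r s + ‖x - m‖ ^ 2 / 2 := by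
    have h := (hq m).trans (add_le_add_left hm _)
    rw [hs] at h
    exact_mod_cast h
  have hmid : midpoint ℝ r s = (r + s) / 2 := by
    rw [midpoint_eq_smul_add, smul_eq_mul, invOf_eq_inv]
    ring
  have hapollonius :=
    EuclideanGeometry.dist_sq_add_dist_sq_eq_two_mul_dist_midpoint_sq_add_half_dist_sq x p q
  simp only [dist_eq_norm] at hapollonius
  have hpq : ‖p - q‖ ^ 2 ≤ 0 := by
    rw [hmid] at hpm hqm
    linarith
  exact sub_eq_zero.1 (norm_eq_zero.1 (pow_eq_zero_iff two_ne_zero |>.1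
    (hpq.antisymm (sq_nonneg _))))

theorem IsProxPoint.isProxPoint_prox {f : E → EReal} {x p : E} (hp : IsProxPoint f x p) :
    IsProxPoint f x (prox f x) :=
  Classical.epsilon_spec (p := IsProxPoint f x) ⟨p, hp⟩

theorem IsProxPoint.prox_eq {f : E → EReal} (hf : IsGamma0 f) {x p : E}
    (hp : IsProxPoint f x p) : prox f x = p :=
  hp.isProxPoint_prox.eq hf.1 hf.2.1 hf.2.2.2 hp

theorem prox_comp_norm {g : ℝ → EReal} (hg : IsGamma0 g) (heven : g.Even) (x : E) :
    prox (fun z : E => g ‖z‖) x = (prox g ‖x‖ / ‖x‖) • x := by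
  have hmono := hg.2.2.2.monotoneOn_Ici_of_even heven
  obtain ⟨p, hmem, hp⟩ := exists_isProxPoint_mem_Icc hg.2.2.1 heven hmono (norm_nonneg x)
  rw [hp.prox_eq hg, (hp.comp_norm hmem).prox_eq (hg.comp_norm heven)]

end Prox

theorem stmt2_general {H : Type*} [NormedAddCommGroup H] [InnerProductSpace ℝ H]
    (γ : ℝ) (hγ : 0 ≤ γ) (φ : ℝ → EReal) (hφ : IsGamma0 φ) (heven : ∀ t : ℝ, φ (-t) = φ t)
    (x : H) :
    IsGamma0 (fun z : H => φ ‖z‖) ∧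
    (x ≠ 0 → prox (rscale γ (fun z : H => φ ‖z‖)) x
              = (prox (rscale γ φ) ‖x‖ / ‖x‖) • x) ∧
    (x = 0 → prox (rscale γ (fun z : H => φ ‖z‖)) x = 0) := by
  have hprox : prox (rscale γ (fun z : H => φ ‖z‖)) x = (prox (rscale γ φ) ‖x‖ / ‖x‖) • x := by
    rw [rscale_comp_norm heven (hφ.zero_mem_edom_of_even heven),
      prox_comp_norm (isGamma0_rscale hφ hγ) (even_rscale heven γ)]
  exact ⟨hφ.comp_norm heven, fun _ => hprox, fun hx => by rw [hprox, hx, smul_zero]⟩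

/-- Lemma 3.2(i). -/
theorem stmt2 {H : Type*} [NormedAddCommGroup H] [InnerProductSpace ℝ H] [CompleteSpace H]
    (γ : ℝ) (hγ : 0 ≤ γ) (φ : ℝ → EReal) (hφ : IsGamma0 φ)
    (heven : ∀ t : ℝ, φ (-t) = φ t) (h0 : (0 : ℝ) ∈ interior (edom φ)) (x : H) :
    IsGamma0 (fun z : H => φ ‖z‖) ∧
    (x ≠ 0 → prox (rscale γ (fun z : H => φ ‖z‖)) x
              = (prox (rscale γ φ) ‖x‖ / ‖x‖) • x) ∧
    (x = 0 → prox (rscale γ (fun z : H => φ ‖z‖)) x = 0) := by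
  exact stmt2_general γ hγ φ hφ heven x
end

section
/- Let φ ∈ Γ₀(H) satisfy φ*(H) ⊂ {0,+∞}, let s: G → [−∞,+∞] be such that S = s⁻¹((0,+∞)) ≠ ∅, let x ∈ H, y ∈ G, and γ ∈ (0,+∞). Then prox_{γ(φ▷s)}(x,y) = ( prox_{γφ} x, proj_{cl conv S} y ), where cl conv S denotes the closed convex hull of S. -/
open scoped Classical

/-
Since `φ*` only takes the values `0` and `+∞`, it is the indicator of a closed convex set `C`, and
Fenchel–Moreau makes `φ = φ**` the support function of `C`. In particular `φ` is positively
homogeneous, so the scaling factors in the preperspective cancel: `φ ⋉ s = φ ⊕ ι_S`, whose lower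
semicontinuous convex envelope is `φ ⊕ ι_D` with `D = cl conv S`. If `v ∈ ∂f(p)`, then
`prox_{γf} (p + γv) = p`, and subgradients of a separable sum are pairs of subgradients; so it is
enough to write `x = p + γv` with `v ∈ ∂φ(p)` and `y = q + γw` with `w ∈ ∂ι_D(q)`. The second
decomposition comes from the projection of `y` onto `D`; the first comes from the projection of
`x/γ` onto `C`, because `p ∈ ∂ι_C(v)` implies `v ∈ ∂φ(p)`.
-/

section Conjugate

variable {E : Type*} [NormedAddCommGroup E] [InnerProductSpace ℝ E] {f : E → EReal}

theorem fconj_le_coe_iff {u : E} {k : ℝ} :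
    fconj f u ≤ k ↔ ∀ z, ((inner ℝ z u - k : ℝ) : EReal) ≤ f z := by
  refine iSup_le_iff.trans (forall_congr' fun z => ?_)
  induction f z with
  | bot => simp only [EReal.coe_sub_bot, top_le_iff, le_bot_iff, EReal.coe_ne_top, EReal.coe_ne_bot]
  | top => simp
  | coe a => norm_cast; exact sub_le_comm

theorem fconj_fconj_le (f : E → EReal) (x : E) : fconj (fconj f) x ≤ f x := by
  refine iSup_le fun u => ?_
  have hyoung : ((inner ℝ x u : ℝ) : EReal) - f x ≤ fconj f u :=
    le_iSup (fun z => ((inner ℝ z u : ℝ) : EReal) - f z) x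
  rw [real_inner_comm]
  generalize fconj f u = b at hyoung ⊢
  generalize f x = a at hyoung ⊢
  induction a <;> induction b <;> norm_cast at hyoung ⊢
  all_goals simp_all [add_comm]

theorem isClosed_setOf_fconj_le (f : E → EReal) (k : ℝ) : IsClosed {u | fconj f u ≤ k} := by
  simp only [fconj_le_coe_iff, Set.ofPred_forall]
  exact isClosed_iInter fun z => isClosed_le
    (continuous_coe_real_ereal.comp (by fun_prop)) continuous_const

theorem convex_setOf_fconj_le (f : E → EReal) (k : ℝ) : Convex ℝ {u | fconj f u ≤ k} := by
  simp only [fconj_le_coe_iff, Set.ofPred_forall]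
  refine convex_iInter fun z => ?_
  have hlower : IsLowerSet {t : ℝ | ((t - k : ℝ) : EReal) ≤ f z} := fun a b hba ha =>
    (EReal.coe_le_coe_iff.2 (sub_le_sub_right hba k)).trans ha
  exact hlower.ordConnected.convex.linear_preimage (innerₛₗ ℝ z)

variable [CompleteSpace E]

theorem exists_strict_separation_epigraph (hlsc : LowerSemicontinuous f) (hconv : ConvexEpi f)
    (hdom : (edom f).Nonempty) {x : E} {r : ℝ} (hr : r < f x) :
    ∃ (w : E) (c k : ℝ), c ≤ 0 ∧ (∀ (z : E) (t : ℝ), f z ≤ t → inner ℝ z w + c * t < k) ∧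
      k < inner ℝ x w + c * r := by
  have hclosed : IsClosed {p : E × ℝ | f p.1 ≤ p.2} :=
    hlsc.isClosed_epigraph.preimage
      (continuous_fst.prodMk (continuous_coe_real_ereal.comp continuous_snd))
  obtain ⟨L, k, hL, hk⟩ :=
    geometric_hahn_banach_closed_point (x := (x, r)) hconv hclosed (not_le.2 hr)
  obtain ⟨w, hw⟩ := (InnerProductSpace.toDual ℝ E).surjective (L.comp (.inl ℝ E ℝ))
  have hLw : ∀ (z : E) (t : ℝ), L (z, t) = inner ℝ z w + L (0, 1) * t := fun z t => by
    have hz : L (z, 0) = inner ℝ z w := by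
      rw [real_inner_comm, ← InnerProductSpace.toDual_apply_apply, hw]; rfl
    rw [← hz, mul_comm, ← smul_eq_mul, ← map_smul, ← map_add]
    simp
  rw [hLw] at hk
  have hlt : ∀ (z : E) (t : ℝ), f z ≤ t → inner ℝ z w + L (0, 1) * t < k := fun z t ht =>
    hLw z t ▸ hL (z, t) ht
  refine ⟨w, L (0, 1), k, ?_, hlt, hk⟩
  obtain ⟨z, hz⟩ := hdom
  by_contra! hc
  -- Otherwise points high above `z` in the epigraph would violate the separation.
  set t := max (f z).toReal ((k - inner ℝ z w) / L (0, 1))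
  have ht := hlt z t ((EReal.le_coe_toReal hz.ne).trans (EReal.coe_le_coe_iff.2 (le_max_left _ _)))
  linarith [(div_le_iff₀' hc).1 (le_max_right (f z).toReal ((k - inner ℝ z w) / L (0, 1)))]

theorem exists_fconj_le_or_separation_edom (hlsc : LowerSemicontinuous f) (hconv : ConvexEpi f)
    (hdom : (edom f).Nonempty) {x : E} {r : ℝ} (hr : r < f x) :
    (∃ (u : E) (k : ℝ), fconj f u ≤ k ∧ r < inner ℝ x u - k) ∨
      ∃ (w : E) (k : ℝ), (∀ z ∈ edom f, inner ℝ z w ≤ k) ∧ k < inner ℝ x w := by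
  obtain ⟨w, c, k, hc, hlt, hk⟩ := exists_strict_separation_epigraph hlsc hconv hdom hr
  rcases hc.lt_or_eq with hc | rfl
  · have hc' : 0 < -c := neg_pos.2 hc
    refine .inl ⟨(-c)⁻¹ • w, k / -c, fconj_le_coe_iff.2 fun z => ?_, ?_⟩
    · refine EReal.le_of_forall_lt_iff_le.1 fun t ht => EReal.coe_le_coe_iff.2 ?_
      rw [real_inner_smul_right, inv_mul_eq_div, ← sub_div, div_le_iff₀ hc']
      linarith [hlt z t ht.le]
    · rw [real_inner_smul_right, inv_mul_eq_div, ← sub_div, lt_div_iff₀ hc']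
      linarith
  · -- The separating hyperplane is vertical.
    simp only [zero_mul, add_zero] at hlt hk
    exact .inr ⟨w, k, fun z hz => (hlt z _ (EReal.le_coe_toReal hz.ne)).le, hk⟩

theorem IsGamma0.exists_fconj_le (hf : IsGamma0 f) : ∃ (u : E) (k : ℝ), fconj f u ≤ k := by
  obtain ⟨⟨z, hz⟩, hbot, hlsc, hconv⟩ := hf
  have hzdom : z ∈ edom f := lt_top_iff_ne_top.2 hz
  have hlt : (((f z).toReal - 1 : ℝ) : EReal) < f z := by
    conv_rhs => rw [← EReal.coe_toReal hz (hbot z)]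
    exact EReal.coe_lt_coe_iff.2 (sub_one_lt _)
  rcases exists_fconj_le_or_separation_edom hlsc hconv ⟨z, hzdom⟩ hlt with
    ⟨u, k, huk, -⟩ | ⟨w, k, hle, hgt⟩
  · exact ⟨u, k, huk⟩
  · exact absurd (hle z hzdom) hgt.not_ge

theorem IsGamma0.exists_fconj_le_of_lt (hf : IsGamma0 f) {x : E} {r : ℝ} (hr : r < f x) :
    ∃ (u : E) (k : ℝ), fconj f u ≤ k ∧ r < inner ℝ x u - k := by
  obtain ⟨u, k, huk⟩ := hf.exists_fconj_le
  obtain ⟨⟨z, hz⟩, -, hlsc, hconv⟩ := hf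
  rcases exists_fconj_le_or_separation_edom hlsc hconv ⟨z, lt_top_iff_ne_top.2 hz⟩ hr with
    h | ⟨w, l, hle, hgt⟩
  · exact h
  -- Tilting the affine minorant `⟪·, u⟫ - k` by a large multiple of the vertical hyperplane
  -- keeps it below `f` and makes it exceed `r` at `x`.
  obtain ⟨c, hc, hcr⟩ : ∃ c : ℝ, 0 ≤ c ∧ r - (inner ℝ x u - k) < c * (inner ℝ x w - l) := by
    obtain ⟨n, hn⟩ := exists_lt_nsmul (sub_pos.2 hgt) (r - (inner ℝ x u - k))
    exact ⟨n, n.cast_nonneg, by rwa [nsmul_eq_mul] at hn⟩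
  refine ⟨u + c • w, k + c * l, fconj_le_coe_iff.2 fun z => ?_, ?_⟩
  · rcases eq_or_ne (f z) ⊤ with hz | hz
    · exact hz ▸ le_top
    · refine le_trans (EReal.coe_le_coe_iff.2 ?_) (fconj_le_coe_iff.1 huk z)
      have htilt := mul_le_mul_of_nonneg_left (hle z (lt_top_iff_ne_top.2 hz)) hc
      rw [inner_add_right, real_inner_smul_right]
      linarith
  · rw [inner_add_right, real_inner_smul_right]
    linarith

theorem IsGamma0.fconj_fconj (hf : IsGamma0 f) : fconj (fconj f) = f := by
  funext x
  refine (fconj_fconj_le f x).antisymm (EReal.ge_of_forall_gt_iff_ge.1 fun r hr => ?_)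
  obtain ⟨u, k, huk, hrk⟩ := hf.exists_fconj_le_of_lt hr
  calc (r : EReal) ≤ ((inner ℝ u x : ℝ) : EReal) - k := by
        rw [real_inner_comm]; exact_mod_cast hrk.le
    _ ≤ ((inner ℝ u x : ℝ) : EReal) - fconj f u := EReal.sub_le_sub le_rfl huk
    _ ≤ fconj (fconj f) x := le_iSup (fun v => ((inner ℝ v x : ℝ) : EReal) - fconj f v) u

end Conjugate

section Indicator

/-- The convex-analytic indicator function `ι_C` of a set `C`: `0` on `C` and `+∞` elsewhere. Its
conjugate is the support function of `C`. -/
noncomputable def indicatorE {E : Type*} (C : Set E) : E → EReal := fun x => if x ∈ C then 0 else ⊤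

section Set

variable {E : Type*} {C D : Set E}

theorem indicatorE_of_mem {x : E} (hx : x ∈ C) : indicatorE C x = 0 := if_pos hx

theorem indicatorE_of_notMem {x : E} (hx : x ∉ C) : indicatorE C x = ⊤ := if_neg hx

theorem indicatorE_nonneg (C : Set E) (x : E) : 0 ≤ indicatorE C x := by
  by_cases hx : x ∈ C
  · exact (indicatorE_of_mem hx).ge
  · exact indicatorE_of_notMem hx ▸ le_top

theorem indicatorE_ne_bot (C : Set E) (x : E) : indicatorE C x ≠ ⊥ :=
  (EReal.bot_lt_zero.trans_le (indicatorE_nonneg C x)).ne'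

theorem indicatorE_anti (hCD : C ⊆ D) (x : E) : indicatorE D x ≤ indicatorE C x := by
  by_cases hx : x ∈ C
  · exact indicatorE_of_mem (hCD hx) ▸ indicatorE_nonneg C x
  · exact indicatorE_of_notMem hx ▸ le_top

theorem eq_indicatorE {f : E → EReal} (hf : ∀ x, f x = 0 ∨ f x = ⊤) :
    f = indicatorE {x | f x ≤ 0} := by
  funext x
  rcases hf x with hx | hx <;> simp [indicatorE, hx]

end Set

theorem lowerSemicontinuous_indicatorE {E : Type*} [TopologicalSpace E] {C : Set E}
    (hC : IsClosed C) : LowerSemicontinuous (indicatorE C) := by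
  intro x a ha
  by_cases hx : x ∈ C
  · exact .of_forall fun z =>
      (ha.trans_eq (indicatorE_of_mem hx)).trans_le (indicatorE_nonneg C z)
  · filter_upwards [hC.isOpen_compl.mem_nhds hx] with z hz
    rwa [indicatorE_of_notMem hz, ← indicatorE_of_notMem hx]

theorem convexEpi_indicatorE {E : Type*} [AddCommGroup E] [Module ℝ E] {C : Set E}
    (hC : Convex ℝ C) : ConvexEpi (indicatorE C) := by
  have hepi : {p : E × ℝ | indicatorE C p.1 ≤ p.2} = C ×ˢ Set.Ici 0 := by
    ext ⟨z, t⟩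
    by_cases hz : z ∈ C
    · simp [indicatorE_of_mem, hz]
    · simp [indicatorE_of_notMem, hz]
  exact (congrArg (Convex ℝ) hepi).mpr (hC.prod (convex_Ici 0))

section Inner

variable {E : Type*} [NormedAddCommGroup E] [InnerProductSpace ℝ E]

theorem IsGamma0.exists_eq_fconj_indicatorE [CompleteSpace E] {f : E → EReal} (hf : IsGamma0 f)
    (hconj : ∀ u, fconj f u = 0 ∨ fconj f u = ⊤) :
    ∃ C : Set E, C.Nonempty ∧ IsClosed C ∧ Convex ℝ C ∧ f = fconj (indicatorE C) := by
  refine ⟨{u | fconj f u ≤ (0 : ℝ)}, ?_, isClosed_setOf_fconj_le f 0, convex_setOf_fconj_le f 0, ?_⟩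
  · obtain ⟨u, k, huk⟩ := hf.exists_fconj_le
    exact ⟨u, ((hconj u).resolve_right (huk.trans_lt (EReal.coe_lt_top k)).ne).le⟩
  · rw [EReal.coe_zero, ← eq_indicatorE hconj, hf.fconj_fconj]

theorem fconj_indicatorE_smul_le (C : Set E) {t : ℝ} (ht : 0 < t) (x : E) :
    fconj (indicatorE C) (t • x) ≤ t * fconj (indicatorE C) x := by
  refine iSup_le fun u => ?_
  have hterm : ((inner ℝ u (t • x) : ℝ) : EReal) - indicatorE C u =
      t * (((inner ℝ u x : ℝ) : EReal) - indicatorE C u) := by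
    by_cases hu : u ∈ C
    · simp [indicatorE_of_mem hu, real_inner_smul_right]
    · simp [indicatorE_of_notMem hu, EReal.coe_mul_bot_of_pos ht]
  exact hterm.trans_le (mul_le_mul_of_nonneg_left
    (le_iSup (fun v => ((inner ℝ v x : ℝ) : EReal) - indicatorE C v) u) (EReal.coe_nonneg.2 ht.le))

theorem fconj_indicatorE_smul (C : Set E) {t : ℝ} (ht : 0 < t) (x : E) :
    fconj (indicatorE C) (t • x) = t * fconj (indicatorE C) x := by
  refine (fconj_indicatorE_smul_le C ht x).antisymm ?_
  have hle := mul_le_mul_of_nonneg_left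
    (fconj_indicatorE_smul_le C (inv_pos.2 ht) (t • x)) (EReal.coe_nonneg.2 ht.le)
  rwa [inv_smul_smul₀ ht.ne', ← mul_assoc, ← EReal.coe_mul, mul_inv_cancel₀ ht.ne', EReal.coe_one,
    one_mul] at hle

theorem prox_smulE_indicatorE {C : Set E} (hC : C.Nonempty) {γ : ℝ} (hγ : 0 < γ) (x : E) :
    prox (smulE γ (indicatorE C)) x = projC C x := by
  have hsmul : smulE γ (indicatorE C) = indicatorE C := by
    funext z
    by_cases hz : z ∈ C
    · simp [smulE, indicatorE_of_mem hz]
    · simp [smulE, indicatorE_of_notMem hz, EReal.coe_mul_top_of_pos hγ]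
  rw [hsmul, prox, projC]
  refine congrArg _ (funext fun p => propext ⟨fun hmin => ?_, fun ⟨hp, hmin⟩ y => ?_⟩)
  · have hp : p ∈ C := by
      obtain ⟨z, hz⟩ := hC
      by_contra hp
      simpa [indicatorE_of_notMem hp, indicatorE_of_mem hz] using hmin z
    refine ⟨hp, fun y hy => le_of_sq_le_sq ?_ (norm_nonneg _)⟩
    have hle := hmin y
    rw [indicatorE_of_mem hp, indicatorE_of_mem hy, zero_add, zero_add, EReal.coe_le_coe_iff] at hle
    linarith
  · by_cases hy : y ∈ C
    · rw [indicatorE_of_mem hp, indicatorE_of_mem hy, zero_add, zero_add, EReal.coe_le_coe_iff]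
      gcongr
      exact hmin y hy
    · simp [indicatorE_of_notMem hy]

end Inner

end Indicator

section Subgradient

variable {E : Type*} [NormedAddCommGroup E] [InnerProductSpace ℝ E] {f : E → EReal} {v p : E}
  {γ : ℝ}

/-- `v ∈ ∂f(p)`: the vector `v` is a subgradient of `f` at `p`. Finiteness of `f p` is part of the
definition. -/
def IsSubgradientAt (f : E → EReal) (v p : E) : Prop :=
  ∃ a : ℝ, f p = a ∧ ∀ z, ((a + inner ℝ (z - p) v : ℝ) : EReal) ≤ f z

protected theorem IsSubgradientAt.smulE (hv : IsSubgradientAt f v p) (hγ : 0 ≤ γ) :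
    IsSubgradientAt (smulE γ f) (γ • v) p := by
  obtain ⟨a, ha, hle⟩ := hv
  refine ⟨γ * a, by rw [smulE, ha, EReal.coe_mul], fun z => ?_⟩
  rw [real_inner_smul_right, ← mul_add, EReal.coe_mul]
  exact mul_le_mul_of_nonneg_left (hle z) (EReal.coe_nonneg.2 hγ)

protected theorem IsSubgradientAt.fconj (hv : IsSubgradientAt f v p) :
    IsSubgradientAt (fconj f) p v := by
  obtain ⟨a, ha, hle⟩ := hv
  have hterm : ∀ z, ((inner ℝ p z - a : ℝ) : EReal) ≤ fconj f z := fun z => by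
    rw [EReal.coe_sub, ← ha]
    exact le_iSup (fun x => ((inner ℝ x z : ℝ) : EReal) - f x) p
  refine ⟨inner ℝ p v - a, le_antisymm (fconj_le_coe_iff.2 fun z => ?_) (hterm v), fun z => ?_⟩
  · convert hle z using 2
    rw [inner_sub_left]; ring
  · convert hterm z using 2
    rw [inner_sub_left, real_inner_comm p, real_inner_comm p]; ring

theorem IsSubgradientAt.prox_objective_quadratic_growth (hv : IsSubgradientAt f v p) (z : E) :
    f p + ((‖p + v - p‖ ^ 2 / 2 + ‖z - p‖ ^ 2 / 2 : ℝ) : EReal) ≤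
      f z + ((‖p + v - z‖ ^ 2 / 2 : ℝ) : EReal) := by
  obtain ⟨a, ha, hle⟩ := hv
  have hexp : ‖p + v - z‖ ^ 2 = ‖v‖ ^ 2 - 2 * inner ℝ (z - p) v + ‖z - p‖ ^ 2 := by
    rw [real_inner_comm, ← norm_sub_sq_real]; congr 2; abel
  calc f p + ((‖p + v - p‖ ^ 2 / 2 + ‖z - p‖ ^ 2 / 2 : ℝ) : EReal)
      = ((a + inner ℝ (z - p) v : ℝ) : EReal) + ((‖p + v - z‖ ^ 2 / 2 : ℝ) : EReal) := by
        rw [ha, hexp, add_sub_cancel_left]; norm_cast; ring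
    _ ≤ _ := add_le_add_left (hle z) _

theorem IsSubgradientAt.prox_add (hv : IsSubgradientAt f v p) : prox f (p + v) = p := by
  have hmin : ∀ z, f p + ((‖p + v - p‖ ^ 2 / 2 : ℝ) : EReal) ≤
      f z + ((‖p + v - z‖ ^ 2 / 2 : ℝ) : EReal) := fun z =>
    (add_le_add_right (EReal.coe_le_coe_iff.2 (le_add_of_nonneg_right (by positivity))) _).trans
      (hv.prox_objective_quadratic_growth z)
  have hprox := Classical.epsilon_spec (p := fun m => ∀ z,
    f m + ((‖p + v - m‖ ^ 2 / 2 : ℝ) : EReal) ≤ f z + ((‖p + v - z‖ ^ 2 / 2 : ℝ) : EReal))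
    ⟨p, hmin⟩ p
  have hle := (hv.prox_objective_quadratic_growth (prox f (p + v))).trans hprox
  obtain ⟨a, ha, -⟩ := hv
  rw [ha, ← EReal.coe_add, ← EReal.coe_add, EReal.coe_le_coe_iff] at hle
  have hnorm : ‖prox f (p + v) - p‖ ^ 2 = 0 := le_antisymm (by linarith) (sq_nonneg _)
  exact sub_eq_zero.1 (norm_eq_zero.1 (pow_eq_zero_iff two_ne_zero |>.1 hnorm))

theorem IsSubgradientAt.prox_smulE_add_smul (hv : IsSubgradientAt f v p) (hγ : 0 ≤ γ) :
    prox (smulE γ f) (p + γ • v) = p :=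
  (hv.smulE hγ).prox_add

theorem exists_isSubgradientAt_indicatorE [CompleteSpace E] {C : Set E} (hne : C.Nonempty)
    (hclosed : IsClosed C) (hconv : Convex ℝ C) (hγ : 0 < γ) (x : E) :
    ∃ p v, IsSubgradientAt (indicatorE C) v p ∧ p + γ • v = x := by
  obtain ⟨p, hp, hproj⟩ := exists_norm_eq_iInf_of_complete_convex hne hclosed.isComplete hconv x
  have hnormal := (norm_eq_iInf_iff_real_inner_le_zero hconv hp).1 hproj
  refine ⟨p, γ⁻¹ • (x - p), ⟨0, indicatorE_of_mem hp, fun z => ?_⟩, by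
    rw [smul_inv_smul₀ hγ.ne', add_sub_cancel]⟩
  by_cases hz : z ∈ C
  · rw [indicatorE_of_mem hz, zero_add, real_inner_smul_right, real_inner_comm]
    exact_mod_cast mul_nonpos_of_nonneg_of_nonpos (inv_nonneg.2 hγ.le) (hnormal z hz)
  · exact indicatorE_of_notMem hz ▸ le_top

theorem exists_isSubgradientAt_fconj_indicatorE [CompleteSpace E] {C : Set E} (hne : C.Nonempty)
    (hclosed : IsClosed C) (hconv : Convex ℝ C) (hγ : 0 < γ) (x : E) :
    ∃ p v, IsSubgradientAt (fconj (indicatorE C)) v p ∧ p + γ • v = x := by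
  obtain ⟨v, p, hp, hx⟩ :=
    exists_isSubgradientAt_indicatorE hne hclosed hconv (inv_pos.2 hγ) (γ⁻¹ • x)
  refine ⟨p, v, hp.fconj, ?_⟩
  rw [← smul_inv_smul₀ hγ.ne' x, ← hx, smul_add, smul_inv_smul₀ hγ.ne', add_comm]

end Subgradient

section SeparableSum

/-- The separable sum `f ⊕ g : (x, y) ↦ f x + g y` on the Hilbert direct sum `H ⊕ G`. -/
noncomputable def sepSum {H G : Type*} (f : H → EReal) (g : G → EReal) :
    WithLp 2 (H × G) → EReal := fun z => f z.fst + g z.snd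

theorem lowerSemicontinuous_sepSum {H G : Type*} [TopologicalSpace H] [TopologicalSpace G]
    {f : H → EReal} {g : G → EReal} (hf : LowerSemicontinuous f) (hg : LowerSemicontinuous g)
    (hfbot : ∀ x, f x ≠ ⊥) (hgbot : ∀ y, g y ≠ ⊥) : LowerSemicontinuous (sepSum f g) :=
  (hf.comp (WithLp.continuous_fst 2 H G)).add' (hg.comp (WithLp.continuous_snd 2 H G))
    fun z => EReal.continuousAt_add (.inr (hgbot z.snd)) (.inl (hfbot z.fst))

theorem exists_coe_add_coe_eq_of_add_le {a b : EReal} (ha : a ≠ ⊥) (hb : b ≠ ⊥) {r : ℝ}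
    (h : a + b ≤ r) : ∃ c d : ℝ, a ≤ c ∧ b ≤ d ∧ c + d = r := by
  induction a with
  | bot => exact absurd rfl ha
  | top => simp [EReal.top_add_of_ne_bot hb] at h
  | coe a =>
    refine ⟨a, r - a, le_rfl, ?_, add_sub_cancel a r⟩
    rw [EReal.coe_sub, EReal.le_sub_iff_add_le (by simp) (by simp), add_comm]
    exact h

section Convex

variable {H G : Type*} [AddCommGroup H] [Module ℝ H] [AddCommGroup G] [Module ℝ G]

theorem convexEpi_sepSum {f : H → EReal} {g : G → EReal} (hf : ConvexEpi f) (hg : ConvexEpi g)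
    (hfbot : ∀ x, f x ≠ ⊥) (hgbot : ∀ y, g y ≠ ⊥) : ConvexEpi (sepSum f g) := by
  rintro ⟨z, r⟩ hz ⟨z', r'⟩ hz' a b ha hb hab
  obtain ⟨c, d, hc, hd, rfl⟩ := exists_coe_add_coe_eq_of_add_le (hfbot z.fst) (hgbot z.snd) hz
  obtain ⟨c', d', hc', hd', rfl⟩ :=
    exists_coe_add_coe_eq_of_add_le (hfbot z'.fst) (hgbot z'.snd) hz'
  have hfst : f (a • z.fst + b • z'.fst) ≤ ((a • c + b • c' : ℝ) : EReal) :=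
    hf (x := (z.fst, c)) hc (y := (z'.fst, c')) hc' ha hb hab
  have hsnd : g (a • z.snd + b • z'.snd) ≤ ((a • d + b • d' : ℝ) : EReal) :=
    hg (x := (z.snd, d)) hd (y := (z'.snd, d')) hd' ha hb hab
  refine (add_le_add hfst hsnd).trans_eq ?_
  rw [← EReal.coe_add, add_add_add_comm, ← smul_add, ← smul_add]
  rfl

theorem ConvexEpi.convex_setOf_le {f : H → EReal} (hf : ConvexEpi f) (r : ℝ) :
    Convex ℝ {z | f z ≤ r} := by
  intro u hu v hv a b ha hb hab
  have h := hf (x := (u, r)) hu (y := (v, r)) hv ha hb hab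
  rwa [Prod.smul_mk, Prod.smul_mk, Prod.mk_add_mk, Convex.combo_self hab] at h

theorem le_sepSum_indicatorE_closure_convexHull [TopologicalSpace H] [TopologicalSpace G]
    {φ : H → EReal} {g : WithLp 2 (H × G) → EReal} {S : Set G}
    (hlsc : LowerSemicontinuous g) (hconv : ConvexEpi g)
    (hle : ∀ z, g z ≤ sepSum φ (indicatorE S) z) (z : WithLp 2 (H × G)) :
    g z ≤ sepSum φ (indicatorE (closure (convexHull ℝ S))) z := by
  have hsub : S ⊆ closure (convexHull ℝ S) := (subset_convexHull ℝ S).trans subset_closure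
  by_cases hz : z.snd ∈ closure (convexHull ℝ S)
  · rw [sepSum, indicatorE_of_mem hz, add_zero]
    refine EReal.le_of_forall_lt_iff_le.1 fun r hr => ?_
    have hclosed : IsClosed {v | g (pairHG z.fst v) ≤ r} :=
      (hlsc.isClosed_preimage (r : EReal)).preimage
        ((WithLp.prod_continuous_toLp 2 H G).comp (.prodMk_right z.fst))
    have hconvex : Convex ℝ {v | g (pairHG z.fst v) ≤ r} := fun u hu v hv a b ha hb hab => by
      have hcombo : pairHG z.fst (a • u + b • v) = a • pairHG z.fst u + b • pairHG z.fst v :=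
        WithLp.ofLp_injective 2 (Prod.ext (Convex.combo_self hab z.fst).symm rfl)
      exact (congrArg (g · ≤ r) hcombo).mpr (hconv.convex_setOf_le r hu hv ha hb hab)
    have hS : S ⊆ {v | g (pairHG z.fst v) ≤ r} := fun v hv =>
      calc g (pairHG z.fst v) ≤ φ z.fst + indicatorE S v := hle _
        _ ≤ r := by rw [indicatorE_of_mem hv, add_zero]; exact hr.le
    exact closure_minimal (convexHull_min hS hconvex) hclosed hz
  · rw [sepSum, indicatorE_of_notMem hz, ← indicatorE_of_notMem fun hS => hz (hsub hS)]
    exact hle z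

end Convex

protected theorem IsSubgradientAt.sepSum {H G : Type*}
    [NormedAddCommGroup H] [InnerProductSpace ℝ H] [NormedAddCommGroup G] [InnerProductSpace ℝ G]
    {f : H → EReal} {g : G → EReal} {u p : H} {v q : G} (hu : IsSubgradientAt f u p)
    (hv : IsSubgradientAt g v q) :
    IsSubgradientAt (sepSum f g) (pairHG u v) (pairHG p q) := by
  obtain ⟨a, ha, hfle⟩ := hu
  obtain ⟨b, hb, hgle⟩ := hv
  refine ⟨a + b, (congrArg₂ (· + ·) ha hb).trans (EReal.coe_add a b).symm, fun z => ?_⟩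
  refine le_trans (le_of_eq ?_) (add_le_add (hfle z.fst) (hgle z.snd))
  rw [← EReal.coe_add, add_add_add_comm, WithLp.prod_inner_apply]
  rfl

end SeparableSum

section Perspective

variable {H G : Type*} [NormedAddCommGroup H] [InnerProductSpace ℝ H]
  [NormedAddCommGroup G] [InnerProductSpace ℝ G] {φ : H → EReal}

theorem prePersp_eq_sepSum (hbot : ∀ x, φ x ≠ ⊥)
    (hhom : ∀ t : ℝ, 0 < t → ∀ x, φ (t • x) = t * φ x) (s : G → EReal) :
    prePersp φ s = sepSum φ (indicatorE (sdom s)) := by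
  funext z
  by_cases hz : z.snd ∈ sdom s
  · have hs : (((s z.snd).toReal : ℝ) : EReal) = s z.snd :=
      EReal.coe_toReal hz.2.ne (bot_le.trans_lt hz.1).ne'
    have hpos : 0 < (s z.snd).toReal := EReal.toReal_pos hz.1 hz.2.ne
    calc prePersp φ s z = s z.snd * φ ((s z.snd).toReal⁻¹ • z.fst) := if_pos hz
      _ = φ ((s z.snd).toReal • (s z.snd).toReal⁻¹ • z.fst) := by rw [hhom _ hpos, hs]
      _ = sepSum φ (indicatorE (sdom s)) z := by
        rw [smul_inv_smul₀ hpos.ne', sepSum, indicatorE_of_mem hz, add_zero]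
  · calc prePersp φ s z = ⊤ := if_neg hz
      _ = sepSum φ (indicatorE (sdom s)) z := by
        rw [sepSum, indicatorE_of_notMem hz, EReal.add_top_of_ne_bot (hbot z.fst)]

theorem persp_eq_sepSum (hbot : ∀ x, φ x ≠ ⊥) (hlsc : LowerSemicontinuous φ)
    (hconv : ConvexEpi φ) (hhom : ∀ t : ℝ, 0 < t → ∀ x, φ (t • x) = t * φ x) (s : G → EReal) :
    persp φ s = sepSum φ (indicatorE (closure (convexHull ℝ (sdom s)))) := by
  funext z
  refine le_antisymm (sSup_le ?_) (le_sSup ⟨_, ?_, ?_, fun r => ?_, rfl⟩)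
  · rintro - ⟨g, hglsc, hgconv, hg, rfl⟩
    rw [prePersp_eq_sepSum hbot hhom] at hg
    exact le_sepSum_indicatorE_closure_convexHull hglsc hgconv hg z
  · exact lowerSemicontinuous_sepSum hlsc (lowerSemicontinuous_indicatorE isClosed_closure) hbot
      (indicatorE_ne_bot _)
  · exact convexEpi_sepSum hconv (convexEpi_indicatorE (convex_convexHull ℝ _).closure) hbot
      (indicatorE_ne_bot _)
  · rw [prePersp_eq_sepSum hbot hhom]
    exact add_le_add_right
      (indicatorE_anti ((subset_convexHull ℝ _).trans subset_closure) r.snd) (φ r.fst)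

end Perspective

/-- Theorem 4.1(ii). -/
theorem stmt8 {H G : Type*} [NormedAddCommGroup H] [InnerProductSpace ℝ H] [CompleteSpace H]
    [NormedAddCommGroup G] [InnerProductSpace ℝ G] [CompleteSpace G]
    (φ : H → EReal) (s : G → EReal) (hφ : IsGamma0 φ)
    (hc : ∀ u : H, fconj φ u = 0 ∨ fconj φ u = ⊤)
    (hS : ∃ v : G, 0 < s v ∧ s v < ⊤)
    (x : H) (y : G) (γ : ℝ) (hγ : 0 < γ) :
    prox (smulE γ (persp φ s)) (pairHG x y) =
      pairHG (prox (smulE γ φ) x)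
        (projC (closure (convexHull ℝ (sdom s))) y) := by
  have hDne : (closure (convexHull ℝ (sdom s))).Nonempty :=
    (Set.Nonempty.mono (subset_convexHull ℝ _) hS).closure
  obtain ⟨C, hCne, hCclosed, hCconv, hφC⟩ := hφ.exists_eq_fconj_indicatorE hc
  obtain ⟨p, v, hv, rfl⟩ := exists_isSubgradientAt_fconj_indicatorE hCne hCclosed hCconv hγ x
  obtain ⟨q, w, hw, rfl⟩ := exists_isSubgradientAt_indicatorE hDne isClosed_closure
    (convex_convexHull ℝ _).closure hγ y
  rw [← hφC] at hv
  have hhom : ∀ t : ℝ, 0 < t → ∀ z, φ (t • z) = t * φ z := fun t ht z => by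
    rw [hφC, fconj_indicatorE_smul C ht]
  obtain ⟨-, hbot, hlsc, hconv⟩ := hφ
  rw [persp_eq_sepSum hbot hlsc hconv hhom, ← prox_smulE_indicatorE hDne hγ,
    hv.prox_smulE_add_smul hγ.le, hw.prox_smulE_add_smul hγ.le]
  exact (hv.sepSum hw).prox_smulE_add_smul hγ.le
end
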